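/- Under Assumptions 1.1, 1.2 and 1.3, almost surely on the event Λ ∩ (complement of {ξ = 0, r̂ > r}) (with θ̂ = lim_n θ_n): ‖∇f(θ_n)‖² = O(γ_n^{−p̂}), |f(θ_n) − f(θ̂)| = O(γ_n^{−p̂}), and ‖θ_n − θ̂‖ = O(γ_n^{−q̂}) as n → ∞, where p̂ = p_{θ̂}, q̂ = q_{θ̂}, r̂ = r_{θ̂}. -/

import Mathlib

open MeasureTheory Filter Asymptotics

/-!
Cut a bounded trajectory into blocks of fixed small length in the clock `γ`. Abel summation shows
that the noise accumulated over a block is `O(γ ^ (-r))`, so one block acts like a gradient step: it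
lowers `f` by at least `c * ‖∇ f‖ ^ 2`, up to an error `O(γ ^ (-2 * m))` for every `m ≤ r`. Hence
`f` converges along the block ends, and the Łojasiewicz inequality with exponent `μ` turns the
descent into a scalar recursion for the gap to the limit, which is `O(γ ^ (-μ * m))` for
`m = min{r, 1 / (2 - μ)}`. Weighting the descent by `γ ^ m`, AM-GM bounds the tail sums of the
gradient norms, so the trajectory has finite length and converges at the rate `γ ^ (-(m - 1))`.

The argument runs twice: with the exponent that Assumption 1.3 provides on a compact set containing
the trajectory, to obtain the limit, and then with the exponent at the limit.
-/

open scoped Gradient Topology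

section RealPowers

lemma one_add_mul_sub_one_le_rpow {e t : ℝ} (ht : 0 < t) (he : e ≤ 0 ∨ 1 ≤ e) :
    1 + e * (t - 1) ≤ t ^ e := by
  rcases he with he | he
  · calc 1 + e * (t - 1) ≤ 1 + e * Real.log t := by
          have := mul_le_mul_of_nonpos_left (Real.log_le_sub_one_of_pos ht) he
          linarith
      _ ≤ Real.exp (Real.log t * e) := by linarith [Real.add_one_le_exp (Real.log t * e)]
      _ = t ^ e := (Real.rpow_def_of_pos ht e).symm
  · simpa using one_add_mul_self_le_rpow_one_add (by linarith : -1 ≤ t - 1) he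

lemma rpow_add_mul_sub_le_rpow {e x y : ℝ} (hx : 0 < x) (hy : 0 < y) (he : e ≤ 0 ∨ 1 ≤ e) :
    x ^ e + e * x ^ (e - 1) * (y - x) ≤ y ^ e := by
  have := Real.rpow_pos_of_pos hx e
  calc x ^ e + e * x ^ (e - 1) * (y - x) = x ^ e * (1 + e * (y / x - 1)) := by
        rw [Real.rpow_sub_one hx.ne']
        field_simp
    _ ≤ x ^ e * (y / x) ^ e := by
        gcongr
        exact one_add_mul_sub_one_le_rpow (div_pos hy hx) he
    _ = y ^ e := by
        rw [Real.div_rpow hy.le hx.le]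
        field_simp

lemma rpow_neg_le_two_rpow_mul_rpow_neg {m s t : ℝ} (hm : 0 ≤ m) (ht : 0 < t) (hts : t ≤ 2 * s) :
    s ^ (-m) ≤ 2 ^ m * t ^ (-m) := by
  have hs : 0 < s := by linarith
  calc s ^ (-m) = 2 ^ m * (2 * s) ^ (-m) := by
        rw [Real.mul_rpow zero_le_two hs.le, ← mul_assoc, ← Real.rpow_add two_pos]
        simp
    _ ≤ 2 ^ m * t ^ (-m) := by
        gcongr ?_ * ?_
        exact Real.rpow_le_rpow_of_nonpos ht hts (neg_nonpos.2 hm)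

lemma exists_forall_le_rpow_mul_rpow {a b : ℝ} (ha : 0 ≤ a) (hb : 0 ≤ b) (hab : 0 < a + b)
    (B : ℝ) : ∃ R ≥ 1, ∀ x ≥ R, ∀ y ≥ R, B ≤ x ^ a * y ^ b := by
  obtain ⟨R, hBR, hR⟩ :=
    (((tendsto_rpow_atTop hab).eventually_ge_atTop B).and (eventually_ge_atTop 1)).exists
  refine ⟨R, hR, fun x hx y hy => ?_⟩
  calc B ≤ R ^ a * R ^ b := by rwa [← Real.rpow_add (by linarith)]
    _ ≤ x ^ a * y ^ b := by
        have := Real.rpow_nonneg (by linarith : 0 ≤ x) a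
        gcongr

lemma rpow_neg_two_mul_eq_sq {s : ℝ} (hs : 0 ≤ s) (m : ℝ) : s ^ (-(2 * m)) = (s ^ (-m)) ^ 2 := by
  rw [← Real.rpow_mul_natCast hs]
  congr 1
  push_cast
  ring

end RealPowers

section Grid

/-- Times `s 0 < s 1 < ⋯`, all at least `1`, whose consecutive gaps lie between `h > 0` and `1`:
the values of the clock `γ` at the ends of the blocks into which a trajectory is cut. -/
structure IsBlockGrid (s : ℕ → ℝ) (h : ℝ) : Prop where
  gap_pos : 0 < h
  one_le : ∀ j, 1 ≤ s j
  add_le : ∀ j, s j + h ≤ s (j + 1)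
  le_add_one : ∀ j, s (j + 1) ≤ s j + 1

namespace IsBlockGrid

variable {s : ℕ → ℝ} {h : ℝ}

lemma pos (hs : IsBlockGrid s h) (j : ℕ) : 0 < s j := one_pos.trans_le (hs.one_le j)

lemma rpow_pos (hs : IsBlockGrid s h) (e : ℝ) (j : ℕ) : 0 < s j ^ e :=
  Real.rpow_pos_of_pos (hs.pos j) e

lemma le_succ (hs : IsBlockGrid s h) (j : ℕ) : s j ≤ s (j + 1) := by
  linarith [hs.add_le j, hs.gap_pos]

lemma tendsto_atTop (hs : IsBlockGrid s h) : Tendsto s atTop atTop := by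
  have linear_growth (j : ℕ) : s 0 + j * h ≤ s j := by
    induction j with
    | zero => simp
    | succ j ih =>
      push_cast
      linarith [hs.add_le j]
  exact tendsto_atTop_mono linear_growth
    (tendsto_atTop_add_const_left _ _ (tendsto_natCast_atTop_atTop.atTop_mul_const hs.gap_pos))

lemma tendsto_rpow_neg (hs : IsBlockGrid s h) {e : ℝ} (he : 0 < e) :
    Tendsto (fun j => s j ^ (-e)) atTop (𝓝 0) :=
  (tendsto_rpow_neg_atTop he).comp hs.tendsto_atTop

lemma rpow_neg_le_rpow_neg (hs : IsBlockGrid s h) {a b : ℝ} (hab : a ≤ b) (j : ℕ) :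
    s j ^ (-b) ≤ s j ^ (-a) :=
  Real.rpow_le_rpow_of_exponent_le (hs.one_le j) (neg_le_neg hab)

lemma isBigO_rpow_neg (hs : IsBlockGrid s h) {a b : ℝ} (hab : a ≤ b) :
    (fun j => s j ^ (-b)) =O[atTop] fun j => s j ^ (-a) :=
  .of_norm_le fun j => by
    simpa [abs_of_pos (hs.rpow_pos _ j)] using hs.rpow_neg_le_rpow_neg hab j

lemma rpow_neg_succ_le (hs : IsBlockGrid s h) {e : ℝ} (he : 0 ≤ e) (j : ℕ) :
    s (j + 1) ^ (-e) ≤ s j ^ (-e) :=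
  Real.rpow_le_rpow_of_nonpos (hs.pos j) (hs.le_succ j) (neg_nonpos.2 he)

lemma isBigO_comp_succ (hs : IsBlockGrid s h) {y : ℕ → ℝ} {e : ℝ} (he : 0 ≤ e)
    (hy : y =O[atTop] fun j => s j ^ (-e)) :
    (fun j => y (j + 1)) =O[atTop] fun j => s j ^ (-e) :=
  (hy.comp_tendsto (tendsto_add_atTop_nat 1)).trans <| .of_norm_le fun j => by
    simpa [abs_of_pos (hs.rpow_pos _ _)] using hs.rpow_neg_succ_le he j

lemma rpow_neg_le_mul_sub (hs : IsBlockGrid s h) {m : ℝ} (hm : 1 < m) (j : ℕ) :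
    s j ^ (-m) ≤ 2 ^ m / ((m - 1) * h) * (s j ^ (1 - m) - s (j + 1) ^ (1 - m)) := by
  have tangent : (m - 1) * s (j + 1) ^ (-m) * (s (j + 1) - s j) ≤
      s j ^ (1 - m) - s (j + 1) ^ (1 - m) := by
    have := rpow_add_mul_sub_le_rpow (hs.pos (j + 1)) (hs.pos j)
      (.inl (by linarith) : 1 - m ≤ 0 ∨ 1 ≤ 1 - m)
    rw [show 1 - m - 1 = -m by ring] at this
    linarith
  have hm' : 0 < m - 1 := sub_pos.2 hm
  have hh := hs.gap_pos
  have hpow := hs.rpow_pos (-m) (j + 1)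
  calc s j ^ (-m) ≤ 2 ^ m * s (j + 1) ^ (-m) :=
        rpow_neg_le_two_rpow_mul_rpow_neg (by linarith) (hs.pos _)
          (by linarith [hs.le_add_one j, hs.one_le j])
    _ = 2 ^ m / ((m - 1) * h) * ((m - 1) * s (j + 1) ^ (-m) * h) := by field_simp
    _ ≤ 2 ^ m / ((m - 1) * h) * ((m - 1) * s (j + 1) ^ (-m) * (s (j + 1) - s j)) := by
        gcongr
        linarith [hs.add_le j]
    _ ≤ 2 ^ m / ((m - 1) * h) * (s j ^ (1 - m) - s (j + 1) ^ (1 - m)) := by gcongr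

end IsBlockGrid

end Grid

section Telescoping

lemma exists_tendsto_of_le_add_sub {v e : ℕ → ℝ} (hv : BddBelow (Set.range v))
    (hstep : ∀ j, v (j + 1) ≤ v j + (e j - e (j + 1))) (he : Tendsto e atTop (𝓝 0)) :
    ∃ l, Tendsto v atTop (𝓝 l) := by
  have hanti : Antitone fun j => v j + e j :=
    antitone_nat_of_succ_le fun j => by linarith [hstep j]
  have hbdd : BddBelow (Set.range fun j => v j + e j) := hv.range_add he.bddBelow_range
  exact ⟨_, by simpa using (tendsto_atTop_ciInf hanti hbdd).sub he⟩

variable {X : Type*} [PseudoMetricSpace X] [CompleteSpace X] {Θ : ℕ → X} {H : ℕ → ℝ}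

lemma exists_forall_dist_le_of_dist_succ_le (hΘ : ∀ j, dist (Θ j) (Θ (j + 1)) ≤ H j - H (j + 1))
    (hH : Tendsto H atTop (𝓝 0)) : ∃ l, ∀ j, dist (Θ j) l ≤ H j := by
  have hanti : Antitone H := antitone_nat_of_succ_le fun j => by
    linarith [hΘ j, dist_nonneg (x := Θ j) (y := Θ (j + 1))]
  have hdist (j i : ℕ) (hji : j ≤ i) : dist (Θ j) (Θ i) ≤ H j := by
    calc dist (Θ j) (Θ i) ≤ ∑ k ∈ Finset.Ico j i, (H k - H (k + 1)) :=
          dist_le_Ico_sum_of_dist_le hji fun _ _ => hΘ _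
      _ = H j - H i := by
          rw [← neg_inj, ← Finset.sum_neg_distrib]
          simpa using Finset.sum_Ico_sub H hji
      _ ≤ H j := sub_le_self _ (hanti.le_of_tendsto hH i)
  obtain ⟨l, hl⟩ := cauchySeq_tendsto_of_complete (cauchySeq_of_le_tendsto_0' H hdist hH)
  exact ⟨l, fun j => le_of_tendsto (tendsto_const_nhds.dist hl) (eventually_atTop.2 ⟨j, hdist j⟩)⟩

lemma exists_eventually_dist_le_of_dist_succ_le
    (hΘ : ∀ᶠ j in atTop, dist (Θ j) (Θ (j + 1)) ≤ H j - H (j + 1))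
    (hH : Tendsto H atTop (𝓝 0)) : ∃ l, ∀ᶠ j in atTop, dist (Θ j) l ≤ H j := by
  obtain ⟨J, hJ⟩ := eventually_atTop.1 hΘ
  obtain ⟨l, hl⟩ := exists_forall_dist_le_of_dist_succ_le
    (Θ := fun j => Θ (j + J)) (H := fun j => H (j + J))
    (fun j => by simpa only [add_right_comm] using hJ (j + J) (by omega))
    (hH.comp (tendsto_add_atTop_nat J))
  refine ⟨l, eventually_atTop.2 ⟨J, fun j hj => ?_⟩⟩
  simpa only [Nat.sub_add_cancel hj] using hl (j - J)

end Telescoping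

section ScalarDescent

lemma rpow_two_div_mul_le_sq {κ s G μ m : ℝ} (hκ : 0 ≤ κ) (hs : 0 < s) (hG : 0 ≤ G) (hμ : 0 < μ)
    (h : κ * s ^ (-(μ * m)) ≤ G ^ μ) : κ ^ (2 / μ) * s ^ (-(2 * m)) ≤ G ^ 2 := by
  calc κ ^ (2 / μ) * s ^ (-(2 * m)) = (κ * s ^ (-(μ * m))) ^ (2 / μ) := by
        rw [Real.mul_rpow hκ (by positivity), ← Real.rpow_mul hs.le]
        congr 2
        field_simp
    _ ≤ (G ^ μ) ^ (2 / μ) := by gcongr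
    _ = G ^ 2 := by
        rw [← Real.rpow_mul hG, mul_div_cancel₀ _ hμ.ne', Real.rpow_ofNat]

lemma exists_rate_constant {μ m c C M : ℝ} (hμ2 : μ ≤ 2) (hm : 1 < m) (hμm : (2 - μ) * m ≤ 1)
    (hc : 0 < c) (hM : 0 < M) :
    ∃ R ≥ 1, ∀ κ ≥ R, ∀ s ≥ R,
      2 * M * κ * (μ * m * s ^ (-(μ * m) - 1)) + C * s ^ (-(2 * m)) ≤
        c * (κ ^ (2 / μ) * s ^ (-(2 * m))) := by
  have hμ : 1 < μ := by nlinarith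
  have ha : 0 ≤ 2 / μ - 1 := by rw [sub_nonneg, le_div_iff₀] <;> linarith
  have hab : 0 < 2 / μ - 1 + (1 - (2 - μ) * m) := by
    rcases hμ2.lt_or_eq with hlt | rfl
    · have : 0 < 2 / μ - 1 := by rw [sub_pos, lt_div_iff₀] <;> linarith
      linarith
    · norm_num
  obtain ⟨R, -, hR⟩ :=
    exists_forall_le_rpow_mul_rpow ha (sub_nonneg.2 hμm) hab (4 * M * (μ * m) / c)
  refine ⟨max R (max 1 (2 * C / c)), by simp, fun κ hκ s hs => ?_⟩
  simp only [ge_iff_le, max_le_iff] at hκ hs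
  have hκ0 : 0 < κ := by linarith
  have hs0 : 0 < s := by linarith
  have hκpow : κ ^ (2 / μ) = κ ^ (2 / μ - 1) * κ := by
    rw [← Real.rpow_add_one hκ0.ne', sub_add_cancel]
  have hspow : s ^ (-(2 * m)) = s ^ (1 - (2 - μ) * m) * s ^ (-(μ * m) - 1) := by
    rw [← Real.rpow_add hs0]
    ring_nf
  have drift : 2 * M * κ * (μ * m * s ^ (-(μ * m) - 1)) ≤
      c / 2 * (κ ^ (2 / μ) * s ^ (-(2 * m))) := by
    have := hR κ hκ.1 s hs.1
    calc 2 * M * κ * (μ * m * s ^ (-(μ * m) - 1))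
        = c / 2 * (4 * M * (μ * m) / c * (κ * s ^ (-(μ * m) - 1))) := by field_simp; ring
      _ ≤ c / 2 * (κ ^ (2 / μ - 1) * s ^ (1 - (2 - μ) * m) * (κ * s ^ (-(μ * m) - 1))) := by gcongr
      _ = c / 2 * (κ ^ (2 / μ) * s ^ (-(2 * m))) := by rw [hκpow, hspow]; ring
  have noise : C * s ^ (-(2 * m)) ≤ c / 2 * (κ ^ (2 / μ) * s ^ (-(2 * m))) := by
    have hCκ : C ≤ c / 2 * κ := by
      have := (div_le_iff₀ hc).1 hκ.2.2
      linarith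
    have hκpow_ge : κ ≤ κ ^ (2 / μ) := Real.self_le_rpow_of_one_le hκ.2.1 (by linarith)
    calc C * s ^ (-(2 * m)) ≤ c / 2 * κ ^ (2 / μ) * s ^ (-(2 * m)) := by
          gcongr
          exact hCκ.trans (by gcongr)
      _ = c / 2 * (κ ^ (2 / μ) * s ^ (-(2 * m))) := mul_assoc _ _ _
  linarith

/-- `x` decreases along the grid `s` by the square of `G`, up to a perturbation of order
`s ^ (-2m)`: the values `x j = f (θ (N j)) - lim f (θ n)` and the gradient norms `G j` along blocks
of a gradient trajectory are of this kind. -/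
structure IsPerturbedDescent (s x G : ℕ → ℝ) (h c C m : ℝ) : Prop where
  grid : IsBlockGrid s h
  c_pos : 0 < c
  C_nonneg : 0 ≤ C
  one_lt : 1 < m
  nonneg : ∀ j, 0 ≤ G j
  descent : ∀ j, x (j + 1) ≤ x j - c * G j ^ 2 + C * s j ^ (-(2 * m))

namespace IsPerturbedDescent

variable {s x G : ℕ → ℝ} {h c C m μ M : ℝ}

lemma exists_tendsto (hd : IsPerturbedDescent s x G h c C m) (hx : BddBelow (Set.range x)) :
    ∃ u, Tendsto x atTop (𝓝 u) := by
  have hm := hd.one_lt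
  set B := 2 ^ m / ((m - 1) * h)
  refine exists_tendsto_of_le_add_sub (e := fun j => C * B * s j ^ (1 - m)) hx (fun j => ?_) ?_
  · have noise : C * s j ^ (-(2 * m)) ≤ C * (B * (s j ^ (1 - m) - s (j + 1) ^ (1 - m))) :=
      mul_le_mul_of_nonneg_left ((hd.grid.rpow_neg_le_rpow_neg (by linarith) j).trans
        (hd.grid.rpow_neg_le_mul_sub hm j)) hd.C_nonneg
    have : 0 ≤ c * G j ^ 2 := mul_nonneg hd.c_pos.le (sq_nonneg _)
    linarith [hd.descent j]
  · simpa using (hd.grid.tendsto_rpow_neg (sub_pos.2 hm)).const_mul (C * B)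

lemma le_rate_succ (hd : IsPerturbedDescent s x G h c C m) (hμ : 0 < μ) (hμ2 : μ ≤ 2)
    (hM : 0 < M) {κ : ℝ} (hCκ : 4 * C ≤ 2 * M * κ) {j : ℕ} (hsj : 4 * (μ * m) ≤ s j)
    (hrate : 2 * M * κ * (μ * m * s j ^ (-(μ * m) - 1)) + C * s j ^ (-(2 * m)) ≤
      c * (κ ^ (2 / μ) * s j ^ (-(2 * m))))
    (hloj : |x j| ≤ M * G j ^ μ) (hj : x j ≤ 2 * M * κ * s j ^ (-(μ * m))) :
    x (j + 1) ≤ 2 * M * κ * s (j + 1) ^ (-(μ * m)) := by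
  have hm := hd.one_lt
  have hs := hd.grid.pos j
  have hC := hd.C_nonneg
  have hc := hd.c_pos
  have hy := hd.grid.rpow_pos (-(μ * m)) j
  have hK : 0 ≤ 2 * M * κ := by linarith
  have tangent : s j ^ (-(μ * m)) - μ * m * s j ^ (-(μ * m) - 1) ≤ s (j + 1) ^ (-(μ * m)) := by
    have htan := rpow_add_mul_sub_le_rpow hs (hd.grid.pos (j + 1))
      (.inl (by nlinarith) : -(μ * m) ≤ 0 ∨ 1 ≤ -(μ * m))
    have hgap : s (j + 1) - s j ≤ 1 := by linarith [hd.grid.le_add_one j]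
    have := mul_le_mul_of_nonneg_left hgap
      (by positivity : 0 ≤ μ * m * s j ^ (-(μ * m) - 1))
    linarith
  have hdesc := hd.descent j
  by_cases hsmall : x j ≤ M * κ * s j ^ (-(μ * m))
  · have hdrop : μ * m * s j ^ (-(μ * m) - 1) ≤ s j ^ (-(μ * m)) / 4 := by
      rw [Real.rpow_sub_one hs.ne', mul_div_assoc', div_le_div_iff₀ hs four_pos]
      nlinarith
    have hnoise : C * s j ^ (-(2 * m)) ≤ M * κ / 2 * s j ^ (-(μ * m)) :=
      mul_le_mul (by linarith) (hd.grid.rpow_neg_le_rpow_neg (by gcongr) j)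
        (hd.grid.rpow_pos _ j).le (by linarith)
    have := mul_le_mul_of_nonneg_left tangent hK
    have := mul_le_mul_of_nonneg_left hdrop hK
    have : 0 ≤ c * G j ^ 2 := by positivity
    linarith
  · have hκ : 0 ≤ κ := by
      by_contra! hneg
      linarith [mul_neg_of_pos_of_neg hM hneg]
    have hGμ : κ * s j ^ (-(μ * m)) ≤ G j ^ μ := by
      refine le_of_mul_le_mul_left ?_ hM
      linarith [le_abs_self (x j)]
    have hGsq := rpow_two_div_mul_le_sq hκ hs (hd.nonneg j) (by linarith) hGμ
    have := mul_le_mul_of_nonneg_left hGsq hc.le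
    have := mul_le_mul_of_nonneg_left tangent hK
    linarith

lemma exists_eventually_le (hd : IsPerturbedDescent s x G h c C m) (hμ2 : μ ≤ 2)
    (hμm : (2 - μ) * m ≤ 1) (hM : 0 < M) (hloj : ∀ᶠ j in atTop, |x j| ≤ M * G j ^ μ) :
    ∃ K, ∀ᶠ j in atTop, x j ≤ K * s j ^ (-(μ * m)) := by
  have hμ : 0 < μ := by nlinarith [hd.one_lt]
  obtain ⟨R, -, hR⟩ := exists_rate_constant (C := C) hμ2 hd.one_lt hμm hd.c_pos hM
  obtain ⟨J, hJ⟩ := eventually_atTop.1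
    ((hd.grid.tendsto_atTop.eventually_ge_atTop (max R (4 * (μ * m)))).and hloj)
  obtain ⟨κ, hκR, hκC, hκJ⟩ : ∃ κ ≥ R, 4 * C ≤ 2 * M * κ ∧ x J ≤ 2 * M * κ * s J ^ (-(μ * m)) := by
    have hlin : Tendsto (fun κ : ℝ => 2 * M * κ) atTop atTop :=
      tendsto_id.const_mul_atTop (by positivity)
    exact ((eventually_ge_atTop R).and ((hlin.eventually_ge_atTop (4 * C)).and
      ((hlin.atTop_mul_const (hd.grid.rpow_pos _ J)).eventually_ge_atTop (x J)))).exists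
  refine ⟨2 * M * κ, eventually_atTop.2 ⟨J, fun j hj => ?_⟩⟩
  induction j, hj using Nat.le_induction with
  | base => exact hκJ
  | succ j hj ih =>
    obtain ⟨hsj, hlojj⟩ := hJ j hj
    rw [max_le_iff] at hsj
    exact hd.le_rate_succ hμ hμ2 hM hκC hsj.2 (hR κ hκR _ hsj.1) hlojj ih

-- Once `x` is far below zero, the gradient dominates the perturbation and `x` keeps decreasing,
-- so that it cannot return to its limit `0`.
lemma exists_eventually_neg_le (hd : IsPerturbedDescent s x G h c C m) (hμ : 0 < μ) (hμ2 : μ ≤ 2)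
    (hM : 0 < M) (hx : Tendsto x atTop (𝓝 0)) (hloj : ∀ᶠ j in atTop, |x j| ≤ M * G j ^ μ) :
    ∃ K, ∀ᶠ j in atTop, -x j ≤ K * s j ^ (-(μ * m)) := by
  obtain ⟨J, hJ⟩ := eventually_atTop.1 hloj
  have hm := hd.one_lt
  have hc := hd.c_pos
  set A := max 1 (C / c)
  have hA1 : 1 ≤ A := le_max_left _ _
  have hCA : C ≤ c * A ^ (2 / μ) := by
    have hApow : A ≤ A ^ (2 / μ) :=
      Real.self_le_rpow_of_one_le hA1 (by rw [le_div_iff₀] <;> linarith)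
    exact (div_le_iff₀' hc).1 ((le_max_right 1 (C / c)).trans hApow)
  have decreasing {j : ℕ} (hj : J ≤ j) (hlow : M * A * s j ^ (-(μ * m)) < -x j) :
      x (j + 1) ≤ x j := by
    have hGμ : A * s j ^ (-(μ * m)) ≤ G j ^ μ := by
      refine le_of_mul_le_mul_left ?_ hM
      linarith [hJ j hj, neg_le_abs (x j)]
    have hGsq := rpow_two_div_mul_le_sq (by linarith) (hd.grid.pos j) (hd.nonneg j)
      (by linarith) hGμ
    have := mul_le_mul_of_nonneg_left hGsq hc.le
    have := mul_le_mul_of_nonneg_right hCA (hd.grid.rpow_pos (-(2 * m)) j).le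
    linarith [hd.descent j]
  refine ⟨M * A, eventually_atTop.2 ⟨J, fun j hj => ?_⟩⟩
  by_contra! hlow
  have stays_low (i : ℕ) (hi : j ≤ i) : M * A * s i ^ (-(μ * m)) < -x i ∧ x i ≤ x j := by
    induction i, hi using Nat.le_induction with
    | base => exact ⟨hlow, le_rfl⟩
    | succ i hi ih =>
      have hdec := decreasing (hj.trans hi) ih.1
      have := mul_le_mul_of_nonneg_left
        (hd.grid.rpow_neg_succ_le (by positivity : 0 ≤ μ * m) i) (by positivity : 0 ≤ M * A)
      exact ⟨by linarith, hdec.trans ih.2⟩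
  have hxj : 0 ≤ x j :=
    le_of_tendsto hx (eventually_atTop.2 ⟨j, fun i hi => (stays_low i hi).2⟩)
  have := mul_pos (by positivity : 0 < M * A) (hd.grid.rpow_pos (-(μ * m)) j)
  linarith

theorem isBigO (hd : IsPerturbedDescent s x G h c C m) (hμ2 : μ ≤ 2) (hμm : (2 - μ) * m ≤ 1)
    (hx : Tendsto x atTop (𝓝 0)) (hloj : x =O[atTop] fun j => G j ^ μ) :
    x =O[atTop] fun j => s j ^ (-(μ * m)) := by
  have hμ : 0 < μ := by nlinarith [hd.one_lt]
  obtain ⟨M, hM, hxM⟩ := hloj.exists_pos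
  have hxM' : ∀ᶠ j in atTop, |x j| ≤ M * G j ^ μ := hxM.bound.mono fun j hj => by
    rwa [Real.norm_eq_abs, Real.norm_of_nonneg (Real.rpow_nonneg (hd.nonneg j) μ)] at hj
  obtain ⟨K₁, hK₁⟩ := hd.exists_eventually_le hμ2 hμm hM hxM'
  obtain ⟨K₂, hK₂⟩ := hd.exists_eventually_neg_le hμ hμ2 hM hx hxM'
  refine .of_bound (max K₁ K₂) ?_
  filter_upwards [hK₁, hK₂] with j h₁ h₂
  have hy := hd.grid.rpow_pos (-(μ * m)) j
  rw [Real.norm_eq_abs, Real.norm_of_nonneg hy.le, abs_le']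
  exact ⟨h₁.trans (by gcongr; exact le_max_left _ _), h₂.trans (by gcongr; exact le_max_right _ _)⟩

lemma sq_isBigO (hd : IsPerturbedDescent s x G h c C m) (hμ : 0 ≤ μ) (hμ2 : μ ≤ 2)
    (hx : x =O[atTop] fun j => s j ^ (-(μ * m))) :
    (fun j => G j ^ 2) =O[atTop] fun j => s j ^ (-(μ * m)) := by
  have hm := hd.one_lt
  have hsum : (fun j => x j - x (j + 1) + C * s j ^ (-(2 * m))) =O[atTop]
      fun j => s j ^ (-(μ * m)) :=
    (hx.sub (hd.grid.isBigO_comp_succ (by positivity) hx)).add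
      ((hd.grid.isBigO_rpow_neg (by gcongr)).const_mul_left C)
  refine (IsBigO.of_bound c⁻¹ (.of_forall fun j => ?_)).trans hsum
  rw [Real.norm_of_nonneg (sq_nonneg (G j)), inv_mul_eq_div, le_div_iff₀' hd.c_pos]
  exact le_trans (by linarith [hd.descent j]) (le_abs_self _)

lemma exists_weighted_descent (hd : IsPerturbedDescent s x G h c C m) (hμm : (2 - μ) * m ≤ 1)
    (hx : x =O[atTop] fun j => s j ^ (-(μ * m))) :
    ∃ D ≥ 0, ∀ᶠ j in atTop,
      c * (s j ^ m * G j ^ 2) ≤ s j ^ m * x j - s (j + 1) ^ m * x (j + 1) + D * s j ^ (-m) := by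
  obtain ⟨K, hK, hxK⟩ := hx.exists_nonneg
  have hm := hd.one_lt
  refine ⟨C + m * K, by linarith [hd.C_nonneg, mul_nonneg (by linarith : 0 ≤ m) hK], ?_⟩
  filter_upwards [(tendsto_add_atTop_nat 1).eventually hxK.bound] with j hxj
  have hs := hd.grid.pos (j + 1)
  rw [Real.norm_of_nonneg (hd.grid.rpow_pos _ _).le] at hxj
  have weight_growth : s (j + 1) ^ m - s j ^ m ≤ m * s (j + 1) ^ (m - 1) := by
    have htan := rpow_add_mul_sub_le_rpow hs (hd.grid.pos j) (.inr hm.le)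
    have hgap : s (j + 1) - s j ≤ 1 := by linarith [hd.grid.le_add_one j]
    have := mul_le_mul_of_nonneg_left hgap (by positivity : 0 ≤ m * s (j + 1) ^ (m - 1))
    linarith
  have weight_mono : 0 ≤ s (j + 1) ^ m - s j ^ m :=
    sub_nonneg.2 (Real.rpow_le_rpow (hd.grid.pos j).le (hd.grid.le_succ j) (by linarith))
  have weight_term : (s (j + 1) ^ m - s j ^ m) * x (j + 1) ≤ m * K * s j ^ (-m) := by
    calc (s (j + 1) ^ m - s j ^ m) * x (j + 1)
        ≤ (s (j + 1) ^ m - s j ^ m) * (K * s (j + 1) ^ (-(μ * m))) := by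
          gcongr
          exact (le_abs_self _).trans hxj
      _ ≤ m * s (j + 1) ^ (m - 1) * (K * s (j + 1) ^ (-(μ * m))) := by gcongr
      _ = m * K * s (j + 1) ^ (-(μ * m - m + 1)) := by
          rw [mul_mul_mul_comm, ← Real.rpow_add hs]
          ring_nf
      _ ≤ m * K * s j ^ (-m) := by
          gcongr
          exact (hd.grid.rpow_neg_le_rpow_neg (by linarith) _).trans
            (hd.grid.rpow_neg_succ_le (by linarith) j)
  have noise_term : s j ^ m * s j ^ (-(2 * m)) = s j ^ (-m) := by
    rw [← Real.rpow_add (hd.grid.pos j)]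
    ring_nf
  have := mul_le_mul_of_nonneg_left (hd.descent j) (hd.grid.rpow_pos m j).le
  linear_combination this + weight_term + C * noise_term

-- AM-GM turns the weighted squares `s ^ m * G ^ 2` into `G` itself, at the price of the summable
-- `s ^ (-m)`.
theorem exists_potential (hd : IsPerturbedDescent s x G h c C m) (hμm : (2 - μ) * m ≤ 1)
    (hx : x =O[atTop] fun j => s j ^ (-(μ * m))) :
    ∃ H : ℕ → ℝ, (H =O[atTop] fun j => s j ^ (-(m - 1))) ∧
      ∀ᶠ j in atTop, G j + s j ^ (-m) ≤ H j - H (j + 1) := by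
  obtain ⟨D, hD, hweighted⟩ := hd.exists_weighted_descent hμm hx
  have hc := hd.c_pos
  set B := (D / (2 * c) + 2) * (2 ^ m / ((m - 1) * h))
  refine ⟨fun j => 1 / (2 * c) * (s j ^ m * x j) + B * s j ^ (1 - m), ?_, ?_⟩
  · have hweight : (fun j => s j ^ m * x j) =O[atTop] fun j => s j ^ (-(m - 1)) := by
      refine ((isBigO_refl _ _).mul hx).trans <|
        (hd.grid.isBigO_rpow_neg (by linarith : m - 1 ≤ μ * m - m)).congr_left fun j => ?_
      rw [← Real.rpow_add (hd.grid.pos j)]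
      ring_nf
    simpa only [neg_sub] using
      (hweight.const_mul_left _).add ((isBigO_refl (fun j => s j ^ (-(m - 1))) _).const_mul_left B)
  · filter_upwards [hweighted] with j hj
    have hw := hd.grid.rpow_pos m j
    have hinv : s j ^ (-m) = (s j ^ m)⁻¹ := Real.rpow_neg (hd.grid.pos j).le m
    have am_gm : G j ≤ 1 / 2 * (s j ^ m * G j ^ 2) + s j ^ (-m) := by
      rw [hinv]
      field_simp
      nlinarith [sq_nonneg (s j ^ m * G j - 1)]
    have hsum := mul_le_mul_of_nonneg_left (hd.grid.rpow_neg_le_mul_sub hd.one_lt j)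
      (by positivity : 0 ≤ D / (2 * c) + 2)
    have hhalf : 1 / 2 * (s j ^ m * G j ^ 2) ≤ 1 / (2 * c) * (s j ^ m * x j -
        s (j + 1) ^ m * x (j + 1)) + D / (2 * c) * s j ^ (-m) := by
      calc 1 / 2 * (s j ^ m * G j ^ 2) = 1 / (2 * c) * (c * (s j ^ m * G j ^ 2)) := by field_simp
        _ ≤ 1 / (2 * c) * (s j ^ m * x j - s (j + 1) ^ m * x (j + 1) + D * s j ^ (-m)) := by gcongr
        _ = _ := by ring
    simp only [B]
    linarith

end IsPerturbedDescent

end ScalarDescent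

section Noise

variable {E : Type*} [NormedAddCommGroup E]

lemma le_biSup_of_finite {ι : Type*} {I : Set ι} (hI : I.Finite) (g : ι → ℝ) {l : ι} (hl : l ∈ I) :
    g l ≤ ⨆ k ∈ I, g k := by
  refine (ciSup_pos hl).ge.trans (le_ciSup (f := fun k => ⨆ _ : k ∈ I, g k) ?_ l)
  refine ((hI.image g).insert 0).bddAbove.mono (Set.range_subset_iff.2 fun k => ?_)
  by_cases hk : k ∈ I
  · simpa [hk] using .inr ⟨k, hk, rfl⟩
  · simp [hk]

lemma norm_sum_Ico_le_biSup {γ : ℕ → ℝ} (hγ : Monotone γ) (hγ_top : Tendsto γ atTop atTop)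
    (y : ℕ → E) {n l : ℕ} {t : ℝ} (hnl : n ≤ l) (hl : γ l - γ n ≤ t) :
    ‖∑ i ∈ Finset.Ico n l, y i‖ ≤
      ⨆ k ∈ Set.Ico n (sSup {k | n ≤ k ∧ γ k - γ n ≤ t}), ‖∑ i ∈ Finset.Icc n k, y i‖ := by
  rcases hnl.eq_or_lt with rfl | hlt
  · rw [Finset.Ico_self, Finset.sum_empty, norm_zero]
    exact Real.iSup_nonneg fun _ => Real.iSup_nonneg fun _ => norm_nonneg _
  obtain ⟨k, rfl⟩ := Nat.exists_eq_add_of_lt hlt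
  have hbdd : BddAbove {k | n ≤ k ∧ γ k - γ n ≤ t} := by
    obtain ⟨Z, hZ⟩ := (hγ_top.eventually_gt_atTop (γ n + t)).exists
    refine ⟨Z, fun k hk => le_of_not_gt fun hlt => ?_⟩
    linarith [hγ hlt.le, hk.2]
  have hmem : n + k ∈ Set.Ico n (sSup {k | n ≤ k ∧ γ k - γ n ≤ t}) :=
    ⟨n.le_add_right k, Nat.lt_of_succ_le (le_csSup hbdd ⟨hnl, hl⟩)⟩
  rw [Finset.Ico_add_one_right_eq_Icc]
  exact le_biSup_of_finite (Set.finite_Ico _ _) (fun k => ‖∑ i ∈ Finset.Icc n k, y i‖) hmem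

variable [NormedSpace ℝ E]

-- Abel summation.
lemma norm_sum_Ico_smul_le {b : ℕ → ℝ} {y : ℕ → E} {C : ℝ} {n k : ℕ} (hnk : n ≤ k)
    (hb0 : 0 ≤ b k) (hb : AntitoneOn b (Set.Ici n))
    (hy : ∀ l ∈ Set.Icc n k, ‖∑ i ∈ Finset.Ico n l, y i‖ ≤ C) :
    ‖∑ i ∈ Finset.Ico n k, b i • y i‖ ≤ C * b n := by
  have by_parts (l : ℕ) (hnl : n ≤ l) (hlk : l ≤ k) :
      ‖∑ i ∈ Finset.Ico n l, b i • y i - b l • ∑ i ∈ Finset.Ico n l, y i‖ ≤ C * (b n - b l) := by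
    induction l, hnl using Nat.le_induction with
    | base => simp
    | succ l hnl ih =>
      have hdecr : 0 ≤ b l - b (l + 1) := sub_nonneg.2 (hb hnl (hnl.trans l.le_succ) l.le_succ)
      calc ‖∑ i ∈ Finset.Ico n (l + 1), b i • y i - b (l + 1) • ∑ i ∈ Finset.Ico n (l + 1), y i‖
          = ‖(∑ i ∈ Finset.Ico n l, b i • y i - b l • ∑ i ∈ Finset.Ico n l, y i) +
              (b l - b (l + 1)) • ∑ i ∈ Finset.Ico n (l + 1), y i‖ := by
            rw [Finset.sum_Ico_succ_top hnl, Finset.sum_Ico_succ_top hnl]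
            congr 1
            module
        _ ≤ C * (b n - b l) + (b l - b (l + 1)) * C := by
            refine norm_add_le_of_le (ih (by omega)) ?_
            rw [norm_smul, Real.norm_of_nonneg hdecr]
            gcongr
            exact hy (l + 1) ⟨by omega, hlk⟩
        _ = C * (b n - b (l + 1)) := by ring
  calc ‖∑ i ∈ Finset.Ico n k, b i • y i‖
      = ‖(∑ i ∈ Finset.Ico n k, b i • y i - b k • ∑ i ∈ Finset.Ico n k, y i) +
          b k • ∑ i ∈ Finset.Ico n k, y i‖ := by rw [sub_add_cancel]
    _ ≤ C * (b n - b k) + b k * C := by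
        refine norm_add_le_of_le (by_parts k hnk le_rfl) ?_
        rw [norm_smul, Real.norm_of_nonneg hb0]
        gcongr
        exact hy k ⟨hnk, le_rfl⟩
    _ = C * b n := by ring

lemma eventually_norm_sum_Ico_smul_le {α γ : ℕ → ℝ} (hγ : Monotone γ)
    (hγ_top : Tendsto γ atTop atTop) {r : ℝ} (hr : 0 ≤ r) {ξ : ℕ → E} {C : ℝ}
    (hnoise : ∀ᶠ n in atTop, ∀ k ≥ n, γ k - γ n ≤ 1 →
      ‖∑ i ∈ Finset.Ico n k, (α i * γ i ^ r) • ξ i‖ ≤ C) :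
    ∀ᶠ n in atTop, ∀ k ≥ n, γ k - γ n ≤ 1 →
      ‖∑ i ∈ Finset.Ico n k, α i • ξ i‖ ≤ C * γ n ^ (-r) := by
  filter_upwards [hnoise, hγ_top.eventually_gt_atTop 0] with n hn hn0 k hk hγk
  have hpos {i : ℕ} (hi : n ≤ i) : 0 < γ i := hn0.trans_le (hγ hi)
  have hsum : ∑ i ∈ Finset.Ico n k, α i • ξ i =
      ∑ i ∈ Finset.Ico n k, γ i ^ (-r) • (α i * γ i ^ r) • ξ i := by
    refine Finset.sum_congr rfl fun i hi => ?_
    rw [smul_smul, mul_left_comm, ← Real.rpow_add (hpos (Finset.mem_Ico.1 hi).1)]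
    simp
  rw [hsum]
  refine norm_sum_Ico_smul_le hk (Real.rpow_nonneg (hpos hk).le _) (fun i hi j _ hij => ?_)
    fun l hl => hn l hl.1 ?_
  · exact Real.rpow_le_rpow_of_nonpos (hpos hi) (hγ hij) (neg_nonpos.2 hr)
  · linarith [hγ hl.2]

end Noise

section BlockGrid

lemma exists_mem_Icc_of_step_le {γ : ℕ → ℝ} {δ : ℝ} {n₀ : ℕ} (hγ_top : Tendsto γ atTop atTop)
    (hδ : 0 ≤ δ) (hstep : ∀ n ≥ n₀, γ (n + 1) ≤ γ n + δ) {t : ℝ} (ht : γ n₀ ≤ t) :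
    ∃ n ≥ n₀, γ n ∈ Set.Icc t (t + δ) := by
  classical
  have hex : ∃ k, t ≤ γ (n₀ + k) := by
    obtain ⟨n, hn, hn₀⟩ := ((hγ_top.eventually_ge_atTop t).and (eventually_ge_atTop n₀)).exists
    exact ⟨n - n₀, by rwa [Nat.add_sub_cancel' hn₀]⟩
  refine ⟨n₀ + Nat.find hex, Nat.le_add_right _ _, Nat.find_spec hex, ?_⟩
  rcases hfind : Nat.find hex with - | k
  · simpa using ht.trans (le_add_of_nonneg_right hδ)
  · have hbefore := Nat.find_min hex (by omega : k < Nat.find hex)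
    have := hstep (n₀ + k) (Nat.le_add_right _ _)
    rw [← add_assoc]
    linarith

-- The `j`-th block starts at the first time the clock passes `γ n₁ + 3 * T / 4 * j`.
lemma exists_strictMono_gap_mem_Icc {γ : ℕ → ℝ} (hγ : Monotone γ) (hγ_top : Tendsto γ atTop atTop)
    (hstep : Tendsto (fun n => γ (n + 1) - γ n) atTop (𝓝 0)) {T : ℝ} (hT : 0 < T) (n₀ : ℕ) :
    ∃ N : ℕ → ℕ, StrictMono N ∧ (∀ j, n₀ ≤ N j) ∧
      ∀ j, γ (N (j + 1)) - γ (N j) ∈ Set.Icc (T / 2) T := by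
  obtain ⟨n₁, hn₁⟩ := eventually_atTop.1 (hstep.eventually_le_const (by positivity : 0 < T / 4))
  choose N hN using fun j : ℕ =>
    exists_mem_Icc_of_step_le (n₀ := max n₀ n₁) (δ := T / 4) hγ_top (by positivity)
      (fun n hn => by linarith [hn₁ n ((le_max_right _ _).trans hn)])
      (le_add_of_nonneg_right (by positivity : 0 ≤ 3 * T / 4 * j))
  have gap (j : ℕ) : γ (N (j + 1)) - γ (N j) ∈ Set.Icc (T / 2) T := by
    obtain ⟨-, hlow, hup⟩ := hN j
    obtain ⟨-, hlow', hup'⟩ := hN (j + 1)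
    push_cast at hlow' hup'
    constructor <;> linarith
  refine ⟨N, strictMono_nat_of_lt_succ fun j => hγ.reflect_lt ?_,
    fun j => (le_max_left _ _).trans (hN j).1, gap⟩
  linarith [(gap j).1]

end BlockGrid

section EulerScheme

variable {E : Type*} [NormedAddCommGroup E] [NormedSpace ℝ E] {g : E → E} {Q : Set E} {L : NNReal}
  {γ : ℕ → ℝ} {θ ξ : ℕ → E} {n k : ℕ} {B T ε : ℝ}

lemma euler_sub_add_eq
    (hrec : ∀ n, θ (n + 1) = θ n - (γ (n + 1) - γ n) • (g (θ n) + ξ n)) (hnk : n ≤ k) :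
    θ k - θ n + (γ k - γ n) • g (θ n) =
      -(∑ i ∈ Finset.Ico n k, (γ (i + 1) - γ i) • (g (θ i) - g (θ n)) +
        ∑ i ∈ Finset.Ico n k, (γ (i + 1) - γ i) • ξ i) := by
  induction k, hnk using Nat.le_induction with
  | base => simp
  | succ k hnk ih =>
    rw [Finset.sum_Ico_succ_top hnk, Finset.sum_Ico_succ_top hnk, hrec]
    linear_combination (norm := module) (1 : ℝ) • ih

lemma norm_euler_error_le (hg : LipschitzOnWith L g Q) (hγ : Monotone γ) (hθ : ∀ n, θ n ∈ Q)
    (hrec : ∀ n, θ (n + 1) = θ n - (γ (n + 1) - γ n) • (g (θ n) + ξ n)) (hnk : n ≤ k)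
    (hB : ∀ i ∈ Set.Ico n k, ‖θ i - θ n‖ ≤ B)
    (hξ : ‖∑ i ∈ Finset.Ico n k, (γ (i + 1) - γ i) • ξ i‖ ≤ ε) :
    ‖θ k - θ n + (γ k - γ n) • g (θ n)‖ ≤ (γ k - γ n) * (L * B) + ε := by
  rw [euler_sub_add_eq hrec hnk, norm_neg]
  refine norm_add_le_of_le ?_ hξ
  calc ‖∑ i ∈ Finset.Ico n k, (γ (i + 1) - γ i) • (g (θ i) - g (θ n))‖
      ≤ ∑ i ∈ Finset.Ico n k, (γ (i + 1) - γ i) * (L * B) := by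
        refine norm_sum_le_of_le _ fun i hi => ?_
        have hstep : 0 ≤ γ (i + 1) - γ i := sub_nonneg.2 (hγ i.le_succ)
        rw [norm_smul, Real.norm_of_nonneg hstep]
        gcongr
        exact (hg.norm_sub_le (hθ i) (hθ n)).trans (by gcongr; exact hB i (Finset.mem_Ico.1 hi))
    _ = (γ k - γ n) * (L * B) := by rw [← Finset.sum_mul, Finset.sum_Ico_sub γ hnk]

lemma norm_euler_sub_le (hg : LipschitzOnWith L g Q) (hγ : Monotone γ) (hθ : ∀ n, θ n ∈ Q)
    (hrec : ∀ n, θ (n + 1) = θ n - (γ (n + 1) - γ n) • (g (θ n) + ξ n)) (hLT : L * T ≤ 1 / 2)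
    (hnk : n ≤ k) (hkT : γ k - γ n ≤ T)
    (hξ : ∀ l ∈ Set.Icc n k, ‖∑ i ∈ Finset.Ico n l, (γ (i + 1) - γ i) • ξ i‖ ≤ ε) :
    ‖θ k - θ n‖ ≤ 2 * (T * ‖g (θ n)‖ + ε) := by
  induction k using Nat.strong_induction_on with
  | _ k ih =>
    have hτ : 0 ≤ γ k - γ n := sub_nonneg.2 (hγ hnk)
    have hT : 0 ≤ T := hτ.trans hkT
    have hε : 0 ≤ ε := (norm_nonneg _).trans (hξ k ⟨hnk, le_rfl⟩)
    set B := 2 * (T * ‖g (θ n)‖ + ε) with hB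
    have : 0 ≤ B := by positivity
    have error := norm_euler_error_le hg hγ hθ hrec hnk
      (fun i hi => ih i hi.2 hi.1 (by linarith [hγ hi.2.le])
        fun l hl => hξ l ⟨hl.1, hl.2.trans hi.2.le⟩) (hξ k ⟨hnk, le_rfl⟩)
    calc ‖θ k - θ n‖
        = ‖(θ k - θ n + (γ k - γ n) • g (θ n)) - (γ k - γ n) • g (θ n)‖ := by
          rw [add_sub_cancel_right]
      _ ≤ ((γ k - γ n) * (L * B) + ε) + (γ k - γ n) * ‖g (θ n)‖ :=
          norm_sub_le_of_le error (by rw [norm_smul, Real.norm_of_nonneg hτ])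
      _ ≤ (T * (L * B) + ε) + T * ‖g (θ n)‖ := by gcongr
      _ = L * T * B + B / 2 := by rw [hB]; ring
      _ ≤ 1 / 2 * B + B / 2 := by gcongr
      _ = B := by ring

end EulerScheme

section GradientBlock

lemma inner_le_of_norm_add_smul_le {E : Type*} [NormedAddCommGroup E] [InnerProductSpace ℝ E]
    {g v : E} {τ e : ℝ} (h : ‖v + τ • g‖ ≤ e) :
    inner ℝ g v ≤ -(τ * ‖g‖ ^ 2) + ‖g‖ * e := by
  have hinner := (real_inner_le_norm g (v + τ • g)).trans
    (mul_le_mul_of_nonneg_left h (norm_nonneg g))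
  rw [inner_add_right, inner_smul_right, real_inner_self_eq_norm_sq] at hinner
  linarith

variable {E : Type*} [NormedAddCommGroup E] [InnerProductSpace ℝ E] [CompleteSpace E] {f : E → ℝ}
  {Q : Set E} {L : NNReal} {x y : E} {γ : ℕ → ℝ} {θ ξ : ℕ → E} {n k : ℕ} {T ε : ℝ}

lemma abs_sub_sub_inner_gradient_le (hf : Differentiable ℝ f) (hQ : Convex ℝ Q)
    (hL : LipschitzOnWith L (∇ f) Q) (hx : x ∈ Q) (hy : y ∈ Q) :
    |f y - f x - inner ℝ (∇ f x) (y - x)| ≤ L * ‖y - x‖ ^ 2 := by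
  have hseg : segment ℝ x y ⊆ Q := hQ.segment_subset hx hy
  have hbound (z : E) (hz : z ∈ segment ℝ x y) :
      ‖InnerProductSpace.toDual ℝ E (∇ f z) - InnerProductSpace.toDual ℝ E (∇ f x)‖ ≤
        L * ‖y - x‖ := by
    rw [← map_sub, LinearIsometryEquiv.norm_map]
    refine (hL.norm_sub_le (hseg hz) hx).trans ?_
    gcongr
    exact norm_sub_le_of_mem_segment hz
  have := (convex_segment x y).norm_image_sub_le_of_norm_hasFDerivWithin_le'
    (fun z _ => (hf z).hasGradientAt.hasFDerivAt.hasFDerivWithinAt) hbound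
    (left_mem_segment ℝ x y) (right_mem_segment ℝ x y)
  rwa [InnerProductSpace.toDual_apply_apply, Real.norm_eq_abs, mul_assoc, ← sq] at this

lemma abs_sub_le_of_lipschitzOnWith_gradient (hf : Differentiable ℝ f) (hQ : Convex ℝ Q)
    (hL : LipschitzOnWith L (∇ f) Q) (hx : x ∈ Q) (hy : y ∈ Q) :
    |f y - f x| ≤ ‖∇ f x‖ ^ 2 + (L + 1) * ‖y - x‖ ^ 2 := by
  have htaylor := abs_sub_sub_inner_gradient_le hf hQ hL hx hy
  have hinner := abs_real_inner_le_norm (∇ f x) (y - x)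
  have htri := abs_add_le (f y - f x - inner ℝ (∇ f x) (y - x)) (inner ℝ (∇ f x) (y - x))
  rw [sub_add_cancel] at htri
  nlinarith [sq_nonneg (‖∇ f x‖ - ‖y - x‖)]

lemma norm_gradient_sq_le (hL : LipschitzOnWith L (∇ f) Q) (hx : x ∈ Q) (hy : y ∈ Q) :
    ‖∇ f y‖ ^ 2 ≤ 2 * ‖∇ f x‖ ^ 2 + 2 * L ^ 2 * ‖y - x‖ ^ 2 := by
  have htri : ‖∇ f y‖ ≤ ‖∇ f x‖ + L * ‖y - x‖ :=
    (norm_le_norm_add_norm_sub' _ (∇ f x)).trans (by gcongr; exact hL.norm_sub_le hy hx)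
  calc ‖∇ f y‖ ^ 2 ≤ (‖∇ f x‖ + L * ‖y - x‖) ^ 2 := by gcongr
    _ ≤ 2 * (‖∇ f x‖ ^ 2 + (L * ‖y - x‖) ^ 2) := add_sq_le
    _ = 2 * ‖∇ f x‖ ^ 2 + 2 * L ^ 2 * ‖y - x‖ ^ 2 := by ring

lemma gradient_block_descent (hf : Differentiable ℝ f) (hQ : Convex ℝ Q)
    (hL : LipschitzOnWith L (∇ f) Q) (hγ : Monotone γ) (hθ : ∀ n, θ n ∈ Q)
    (hrec : ∀ n, θ (n + 1) = θ n - (γ (n + 1) - γ n) • (∇ f (θ n) + ξ n)) (hT : 0 < T)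
    (hLT : L * T ≤ 1 / 80) (hnk : n ≤ k) (hτ : γ k - γ n ∈ Set.Icc (T / 2) T)
    (hξ : ∀ l ∈ Set.Icc n k, ‖∑ i ∈ Finset.Ico n l, (γ (i + 1) - γ i) • ξ i‖ ≤ ε) :
    f (θ k) ≤ f (θ n) - T / 4 * ‖∇ f (θ n)‖ ^ 2 + 9 / T * ε ^ 2 := by
  set G := ‖∇ f (θ n)‖
  set v := θ k - θ n
  set B := 2 * (T * G + ε)
  have hε : 0 ≤ ε := (norm_nonneg _).trans (hξ k ⟨hnk, le_rfl⟩)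
  have displacement (i : ℕ) (hi : i ∈ Set.Icc n k) : ‖θ i - θ n‖ ≤ B :=
    norm_euler_sub_le hL hγ hθ hrec (by linarith) hi.1 (by linarith [hγ hi.2, hτ.2])
      fun l hl => hξ l ⟨hl.1, hl.2.trans hi.2⟩
  have error : ‖v + (γ k - γ n) • ∇ f (θ n)‖ ≤ T * G / 40 + 2 * ε := by
    calc ‖v + (γ k - γ n) • ∇ f (θ n)‖ ≤ (γ k - γ n) * (L * B) + ε :=
          norm_euler_error_le hL hγ hθ hrec hnk
            (fun i hi => displacement i (Set.Ico_subset_Icc_self hi)) (hξ k ⟨hnk, le_rfl⟩)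
      _ ≤ T * (L * B) + ε := by gcongr; exact hτ.2
      _ = L * T * B + ε := by ring
      _ ≤ 1 / 80 * B + ε := by gcongr
      _ ≤ T * G / 40 + 2 * ε := by linarith
  have first_order : inner ℝ (∇ f (θ n)) v ≤ -(T / 2 * G ^ 2) + G * (T * G / 40 + 2 * ε) := by
    refine (inner_le_of_norm_add_smul_le error).trans ?_
    gcongr
    exact hτ.1
  have second_order : L * ‖v‖ ^ 2 ≤ T * G ^ 2 / 10 + ε ^ 2 / (10 * T) := by
    calc L * ‖v‖ ^ 2 ≤ L * B ^ 2 := by gcongr; exact displacement k ⟨hnk, le_rfl⟩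
      _ = L * T * (B ^ 2 / T) := by field_simp
      _ ≤ 1 / 80 * ((2 * (T * G + ε)) ^ 2 / T) := by gcongr
      _ ≤ 1 / 80 * (4 * (2 * ((T * G) ^ 2 + ε ^ 2)) / T) := by
          rw [mul_pow]
          gcongr
          · norm_num
          · exact add_sq_le
      _ = T * G ^ 2 / 10 + ε ^ 2 / (10 * T) := by field_simp; ring
  have young : 2 * (G * ε) ≤ T / 8 * G ^ 2 + 8 / T * ε ^ 2 := by
    have : 0 ≤ (T * G - 8 * ε) ^ 2 / (8 * T) := by positivity
    have : (T * G - 8 * ε) ^ 2 / (8 * T) = T / 8 * G ^ 2 - 2 * (G * ε) + 8 / T * ε ^ 2 := by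
      field_simp
      ring
    linarith
  have htaylor := (abs_le.1 (abs_sub_sub_inner_gradient_le hf hQ hL (hθ n) (hθ k))).2
  have : ε ^ 2 / (10 * T) = 1 / 10 * (ε ^ 2 / T) := by field_simp
  have : 0 ≤ ε ^ 2 / T := by positivity
  have : 9 / T * ε ^ 2 = 9 * (ε ^ 2 / T) := by ring
  have : 8 / T * ε ^ 2 = 8 * (ε ^ 2 / T) := by ring
  nlinarith

end GradientBlock

/-- The Łojasiewicz inequality `|f x - b| ≤ M * ‖∇ f x‖ ^ μ` with exponent `μ ∈ (1, 2]`, for `x`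
eventually along the filter `F`. The data `δ`, `M` of the paper are absorbed by the `O` notation:
Assumption 1.3 is the case `F = 𝓟 Q ⊓ comap f (𝓝 b)`, its local form the case `F = 𝓝 x₀`. -/
def HasLojasiewiczExponent {E : Type*} [NormedAddCommGroup E] [InnerProductSpace ℝ E]
    [CompleteSpace E] (f : E → ℝ) (b : ℝ) (F : Filter E) (μ : ℝ) : Prop :=
  μ ∈ Set.Ioc 1 2 ∧ (fun x => f x - b) =O[F] fun x => ‖∇ f x‖ ^ μ

section Lojasiewicz

variable {E : Type*} [NormedAddCommGroup E] [InnerProductSpace ℝ E] [CompleteSpace E] {f : E → ℝ}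
  {b μ δ M : ℝ}

lemma hasLojasiewiczExponent_of_eventually_le {F : Filter E} (hμ : μ ∈ Set.Ioc 1 2)
    (h : ∀ᶠ x in F, |f x - b| ≤ M * ‖∇ f x‖ ^ μ) : HasLojasiewiczExponent f b F μ :=
  ⟨hμ, .of_bound M <| h.mono fun x hx => by
    rwa [Real.norm_of_nonneg (Real.rpow_nonneg (norm_nonneg (∇ f x)) μ)]⟩

lemma hasLojasiewiczExponent_inf_comap {Q : Set E} (hδ : 0 < δ) (hμ : μ ∈ Set.Ioc 1 2)
    (h : ∀ x ∈ Q, |f x - b| ≤ δ → |f x - b| ≤ M * ‖∇ f x‖ ^ μ) :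
    HasLojasiewiczExponent f b (𝓟 Q ⊓ comap f (𝓝 b)) μ :=
  hasLojasiewiczExponent_of_eventually_le hμ <| by
    filter_upwards [mem_inf_of_left (mem_principal_self Q),
      mem_inf_of_right (preimage_mem_comap (Metric.closedBall_mem_nhds b hδ))] with x hx hxδ
    exact h x hx hxδ

lemma hasLojasiewiczExponent_nhds {x : E} (hδ : 0 < δ) (hμ : μ ∈ Set.Ioc 1 2)
    (h : ∀ y, ‖y - x‖ ≤ δ → |f y - f x| ≤ M * ‖∇ f y‖ ^ μ) :
    HasLojasiewiczExponent f (f x) (𝓝 x) μ :=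
  hasLojasiewiczExponent_of_eventually_le hμ <|
    mem_of_superset (Metric.closedBall_mem_nhds x hδ) fun y hy => h y (mem_closedBall_iff_norm.1 hy)

end Lojasiewicz

section BlockDescent

/-- A trajectory `θ` cut into the blocks `[N j, N (j + 1)]`, of length between `h` and `1` with
respect to the clock `γ`, such that `f` decreases along each block and the displacement inside it is
controlled by the gradient at its left end, up to errors of the order of the noise `γ ^ (-m)`. -/
structure IsBlockDescent {E : Type*} [NormedAddCommGroup E] [InnerProductSpace ℝ E]
    [CompleteSpace E] (f : E → ℝ) (θ : ℕ → E) (γ : ℕ → ℝ) (N : ℕ → ℕ) (h c C m : ℝ) : Prop where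
  strictMono : StrictMono N
  monotone : Monotone γ
  grid : IsBlockGrid (fun j => γ (N j)) h
  c_pos : 0 < c
  C_nonneg : 0 ≤ C
  one_lt : 1 < m
  descent : ∀ j, f (θ (N (j + 1))) ≤
    f (θ (N j)) - c * ‖∇ f (θ (N j))‖ ^ 2 + C * γ (N j) ^ (-(2 * m))
  norm_sub_le : ∀ j, ∀ n ∈ Set.Icc (N j) (N (j + 1)),
    ‖θ n - θ (N j)‖ ≤ C * (‖∇ f (θ (N j))‖ + γ (N j) ^ (-m))

variable {E : Type*} [NormedAddCommGroup E] [InnerProductSpace ℝ E] [CompleteSpace E] {f : E → ℝ}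
  {Q : Set E} {L : NNReal} {θ ξ : ℕ → E} {γ : ℕ → ℝ} {N : ℕ → ℕ} {h c C m μ r u : ℝ}

theorem exists_isBlockDescent (hf : Differentiable ℝ f) (hQ : Convex ℝ Q)
    (hL : LipschitzOnWith L (∇ f) Q) (hθ : ∀ n, θ n ∈ Q) (hγ : Monotone γ)
    (hγ_top : Tendsto γ atTop atTop)
    (hstep : Tendsto (fun n => γ (n + 1) - γ n) atTop (𝓝 0))
    (hrec : ∀ n, θ (n + 1) = θ n - (γ (n + 1) - γ n) • (∇ f (θ n) + ξ n)) (hr : 1 < r)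
    (hnoise : ∀ᶠ n in atTop, ∀ k ≥ n, γ k - γ n ≤ 1 →
      ‖∑ i ∈ Finset.Ico n k, (γ (i + 1) - γ i) • ξ i‖ ≤ C * γ n ^ (-r)) :
    ∃ N h c K, IsBlockDescent f θ γ N h c K r := by
  obtain ⟨n₀, hn₀⟩ := eventually_atTop.1 (hnoise.and (hγ_top.eventually_ge_atTop 1))
  obtain ⟨T, hT, hT1, hLT⟩ : ∃ T : ℝ, 0 < T ∧ T ≤ 1 ∧ L * T ≤ 1 / 80 := by
    refine ⟨1 / (80 * (L + 1)), by positivity, ?_, ?_⟩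
    · rw [div_le_one (by positivity)]
      linarith [L.coe_nonneg]
    · rw [mul_one_div, div_le_div_iff₀ (by positivity) (by positivity)]
      linarith
  obtain ⟨N, hN, hN₀, gap⟩ := exists_strictMono_gap_mem_Icc hγ hγ_top hstep hT n₀
  have grid : IsBlockGrid (fun j => γ (N j)) (T / 2) :=
    { gap_pos := by positivity
      one_le := fun j => (hn₀ _ (hN₀ j)).2
      add_le := fun j => by linarith [(gap j).1]
      le_add_one := fun j => by linarith [(gap j).2] }
  have hC : 0 ≤ C := nonneg_of_mul_nonneg_left
    ((norm_nonneg _).trans ((hn₀ _ (hN₀ 0)).1 _ le_rfl (by simp))) (grid.rpow_pos (-r) 0)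
  have noise_le (j l : ℕ) (hl : l ∈ Set.Icc (N j) (N (j + 1))) :
      ‖∑ i ∈ Finset.Ico (N j) l, (γ (i + 1) - γ i) • ξ i‖ ≤ C * γ (N j) ^ (-r) :=
    (hn₀ _ (hN₀ j)).1 l hl.1 (by linarith [hγ hl.2, (gap j).2])
  refine ⟨N, T / 2, T / 4, 2 * (1 + C) + 9 / T * C ^ 2, hN, hγ, grid, by positivity, by positivity,
    hr, fun j => ?_, fun j n hn => ?_⟩
  · have hdesc := gradient_block_descent hf hQ hL hγ hθ hrec hT hLT (hN.monotone j.le_succ) (gap j)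
      (noise_le j)
    have : 0 ≤ 2 * (1 + C) * γ (N j) ^ (-(2 * r)) :=
      mul_nonneg (by positivity) (grid.rpow_pos _ j).le
    rw [mul_pow, ← rpow_neg_two_mul_eq_sq (grid.pos j).le] at hdesc
    linarith
  · have hσ := grid.rpow_pos (-r) j
    calc ‖θ n - θ (N j)‖ ≤ 2 * (T * ‖∇ f (θ (N j))‖ + C * γ (N j) ^ (-r)) :=
          norm_euler_sub_le hL hγ hθ hrec (hLT.trans (by norm_num)) hn.1
            ((sub_le_sub_right (hγ hn.2) _).trans (gap j).2)
            fun l hl => noise_le j l ⟨hl.1, hl.2.trans hn.2⟩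
      _ ≤ 2 * ((1 + C) * ‖∇ f (θ (N j))‖ + (1 + C) * γ (N j) ^ (-r)) := by
          gcongr <;> linarith
      _ = 2 * (1 + C) * (‖∇ f (θ (N j))‖ + γ (N j) ^ (-r)) := by ring
      _ ≤ _ := by
          gcongr
          exact le_add_of_nonneg_right (by positivity)

namespace IsBlockDescent

lemma of_le (hb : IsBlockDescent f θ γ N h c C r) (hm : 1 < m) (hmr : m ≤ r) :
    IsBlockDescent f θ γ N h c C m :=
  have hC := hb.C_nonneg
  { hb with
    one_lt := hm
    descent := fun j => (hb.descent j).trans <| by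
      gcongr _ + C * ?_
      exact hb.grid.rpow_neg_le_rpow_neg (by linarith) j
    norm_sub_le := fun j n hn => (hb.norm_sub_le j n hn).trans <| by
      gcongr C * (_ + ?_)
      exact hb.grid.rpow_neg_le_rpow_neg hmr j }

lemma isPerturbedDescent (hb : IsBlockDescent f θ γ N h c C m) (u : ℝ) :
    IsPerturbedDescent (fun j => γ (N j)) (fun j => f (θ (N j)) - u)
      (fun j => ‖∇ f (θ (N j))‖) h c C m :=
  { hb with
    nonneg := fun _ => norm_nonneg _
    descent := fun j => by linarith [hb.descent j] }

lemma exists_tendsto (hb : IsBlockDescent f θ γ N h c C m)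
    (hbdd : BddBelow (Set.range fun n => f (θ n))) :
    ∃ u, Tendsto (fun j => f (θ (N j))) atTop (𝓝 u) := by
  have := (hb.isPerturbedDescent 0).exists_tendsto
  simp only [sub_zero] at this
  exact this (hbdd.mono (Set.range_comp_subset_range N fun n => f (θ n)))

lemma isBigO_of_forall_block {F : Type*} [SeminormedAddCommGroup F] {y : ℕ → F} {b : ℕ → ℝ} {e : ℝ}
    (hb : IsBlockDescent f θ γ N h c C m) (he : 0 ≤ e)
    (hbO : b =O[atTop] fun j => γ (N j) ^ (-e))
    (hy : ∀ᶠ j in atTop, ∀ n ∈ Set.Icc (N j) (N (j + 1)), ‖y n‖ ≤ b j) :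
    y =O[atTop] fun n => γ n ^ (-e) := by
  obtain ⟨K, hK, hbK⟩ := hbO.exists_nonneg
  obtain ⟨J, hJ⟩ := eventually_atTop.1 (hy.and hbK.bound)
  refine .of_bound (K * 2 ^ e) ((eventually_gt_atTop (N J)).mono fun n hn => ?_)
  obtain ⟨j, hjn, hnj⟩ := hb.strictMono.exists_between_of_tendsto_atTop
    hb.strictMono.tendsto_atTop ((hb.strictMono.monotone J.zero_le).trans_lt hn)
  have hJj : J ≤ j := Nat.le_of_lt_succ (hb.strictMono.lt_iff_lt.1 (hn.trans_le hnj))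
  obtain ⟨hyj, hbj⟩ := hJ j hJj
  have hs := hb.grid.pos j
  have hγn : 0 < γ n := hs.trans_le (hb.monotone hjn.le)
  have hγ2 : γ n ≤ 2 * γ (N j) := by
    linarith [hb.monotone hnj, hb.grid.le_add_one j, hb.grid.one_le j]
  calc ‖y n‖ ≤ b j := hyj n ⟨hjn.le, hnj⟩
    _ ≤ K * γ (N j) ^ (-e) := by
        simpa [abs_of_pos (hb.grid.rpow_pos _ j)] using (le_abs_self _).trans hbj
    _ ≤ K * (2 ^ e * γ n ^ (-e)) := by
        gcongr
        exact rpow_neg_le_two_rpow_mul_rpow_neg he hγn hγ2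
    _ = K * 2 ^ e * ‖γ n ^ (-e)‖ := by
        rw [Real.norm_of_nonneg (by positivity), mul_assoc]

lemma exists_sub_isBigO (hb : IsBlockDescent f θ γ N h c C m) (hμm : (2 - μ) * m ≤ 1)
    (hx : (fun j => f (θ (N j)) - u) =O[atTop] fun j => γ (N j) ^ (-(μ * m))) :
    ∃ l, (fun n => θ n - l) =O[atTop] fun n => γ n ^ (-(m - 1)) := by
  obtain ⟨H, hHO, hH⟩ := (hb.isPerturbedDescent u).exists_potential hμm hx
  have hm : 0 < m - 1 := sub_pos.2 hb.one_lt
  have block (j : ℕ) (hj : ‖∇ f (θ (N j))‖ + γ (N j) ^ (-m) ≤ H j - H (j + 1)) (n : ℕ)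
      (hn : n ∈ Set.Icc (N j) (N (j + 1))) : ‖θ n - θ (N j)‖ ≤ C * H j - C * H (j + 1) := by
    rw [← mul_sub]
    exact (hb.norm_sub_le j n hn).trans (mul_le_mul_of_nonneg_left hj hb.C_nonneg)
  have hCHO := hHO.const_mul_left C
  obtain ⟨l, hl⟩ := exists_eventually_dist_le_of_dist_succ_le
    (Θ := fun j => θ (N j)) (H := fun j => C * H j)
    (hH.mono fun j hj => by
      rw [dist_comm, dist_eq_norm]
      exact block j hj _ ⟨hb.strictMono.monotone j.le_succ, le_rfl⟩)
    (hCHO.trans_tendsto (hb.grid.tendsto_rpow_neg hm))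
  refine ⟨l, hb.isBigO_of_forall_block hm.le
    ((hCHO.sub (hb.grid.isBigO_comp_succ hm.le hCHO)).add hCHO) ?_⟩
  filter_upwards [hH, hl] with j hHj hlj n hn
  rw [dist_eq_norm] at hlj
  exact (norm_sub_le_norm_sub_add_norm_sub ..).trans (add_le_add (block j hHj n hn) hlj)

lemma norm_sub_sq_le (hb : IsBlockDescent f θ γ N h c C m) {j n : ℕ}
    (hn : n ∈ Set.Icc (N j) (N (j + 1))) :
    ‖θ n - θ (N j)‖ ^ 2 ≤ 2 * C ^ 2 * (‖∇ f (θ (N j))‖ ^ 2 + γ (N j) ^ (-(2 * m))) := by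
  rw [rpow_neg_two_mul_eq_sq (hb.grid.pos j).le]
  calc ‖θ n - θ (N j)‖ ^ 2 ≤ (C * (‖∇ f (θ (N j))‖ + γ (N j) ^ (-m))) ^ 2 := by
        gcongr
        exact hb.norm_sub_le j n hn
    _ = C ^ 2 * (‖∇ f (θ (N j))‖ + γ (N j) ^ (-m)) ^ 2 := mul_pow ..
    _ ≤ C ^ 2 * (2 * (‖∇ f (θ (N j))‖ ^ 2 + (γ (N j) ^ (-m)) ^ 2)) := by
        gcongr
        exact add_sq_le
    _ = _ := by ring

lemma gradient_sq_add_isBigO (hb : IsBlockDescent f θ γ N h c C m) (hμ : 0 ≤ μ) (hμ2 : μ ≤ 2)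
    (hx : (fun j => f (θ (N j)) - u) =O[atTop] fun j => γ (N j) ^ (-(μ * m))) :
    (fun j => ‖∇ f (θ (N j))‖ ^ 2 + γ (N j) ^ (-(2 * m))) =O[atTop]
      fun j => γ (N j) ^ (-(μ * m)) :=
  have hm := hb.one_lt
  ((hb.isPerturbedDescent u).sq_isBigO hμ hμ2 hx).add (hb.grid.isBigO_rpow_neg (by gcongr))

theorem gradient_sq_isBigO (hb : IsBlockDescent f θ γ N h c C m) (hL : LipschitzOnWith L (∇ f) Q)
    (hθ : ∀ n, θ n ∈ Q) (hμ : 0 ≤ μ) (hμ2 : μ ≤ 2)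
    (hx : (fun j => f (θ (N j)) - u) =O[atTop] fun j => γ (N j) ^ (-(μ * m))) :
    (fun n => ‖∇ f (θ n)‖ ^ 2) =O[atTop] fun n => γ n ^ (-(μ * m)) := by
  have hm := hb.one_lt
  have hGO := (hb.isPerturbedDescent u).sq_isBigO hμ hμ2 hx
  refine hb.isBigO_of_forall_block (by positivity) ((hGO.const_mul_left 2).add
    ((hb.gradient_sq_add_isBigO hμ hμ2 hx).const_mul_left (2 * L ^ 2 * (2 * C ^ 2))))
    (.of_forall fun j n hn => ?_)
  rw [Real.norm_of_nonneg (sq_nonneg _), mul_assoc (2 * (L : ℝ) ^ 2)]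
  exact (norm_gradient_sq_le hL (hθ _) (hθ n)).trans (by gcongr; exact hb.norm_sub_sq_le hn)

theorem sub_isBigO (hb : IsBlockDescent f θ γ N h c C m) (hf : Differentiable ℝ f)
    (hQ : Convex ℝ Q) (hL : LipschitzOnWith L (∇ f) Q) (hθ : ∀ n, θ n ∈ Q) (hμ : 0 ≤ μ)
    (hμ2 : μ ≤ 2) (hx : (fun j => f (θ (N j)) - u) =O[atTop] fun j => γ (N j) ^ (-(μ * m))) :
    (fun n => f (θ n) - u) =O[atTop] fun n => γ n ^ (-(μ * m)) := by
  have hm := hb.one_lt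
  have hGO := (hb.isPerturbedDescent u).sq_isBigO hμ hμ2 hx
  have hrO := (hb.gradient_sq_add_isBigO hμ hμ2 hx).const_mul_left ((L + 1) * (2 * C ^ 2))
  refine hb.isBigO_of_forall_block (by positivity) ((hGO.add hrO).add hx.norm_left)
    (.of_forall fun j n hn => (norm_sub_le_norm_sub_add_norm_sub ..).trans (add_le_add_left ?_ _))
  rw [mul_assoc ((L : ℝ) + 1)]
  exact (abs_sub_le_of_lipschitzOnWith_gradient hf hQ hL (hθ _) (hθ n)).trans
    (by gcongr; exact hb.norm_sub_sq_le hn)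

theorem rates (hb : IsBlockDescent f θ γ N h c C m) (hf : Differentiable ℝ f)
    (hQ : Convex ℝ Q) (hL : LipschitzOnWith L (∇ f) Q) (hθ : ∀ n, θ n ∈ Q)
    (hμm : (2 - μ) * m ≤ 1) (hu : Tendsto (fun j => f (θ (N j))) atTop (𝓝 u)) {F : Filter E}
    (hloj : HasLojasiewiczExponent f u F μ) (hF : Tendsto (fun j => θ (N j)) atTop F) :
    ((fun n => ‖∇ f (θ n)‖ ^ 2) =O[atTop] fun n => γ n ^ (-(μ * m))) ∧
      ((fun n => f (θ n) - u) =O[atTop] fun n => γ n ^ (-(μ * m))) ∧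
      ∃ l, (fun n => θ n - l) =O[atTop] fun n => γ n ^ (-(m - 1)) := by
  obtain ⟨⟨hμ, hμ2⟩, hO⟩ := hloj
  have hx := (hb.isPerturbedDescent u).isBigO hμ2 hμm (by simpa using hu.sub_const u)
    (hO.comp_tendsto hF)
  exact ⟨hb.gradient_sq_isBigO hL hθ (by linarith) hμ2 hx,
    hb.sub_isBigO hf hQ hL hθ (by linarith) hμ2 hx, hb.exists_sub_isBigO hμm hx⟩

end IsBlockDescent

end BlockDescent

section Trajectory

/-- The exponent `min{r, 1 / (2 - μ)}`, read as `r` for `μ = 2`: it is `min{r, r_θ}` in the paper's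
notation, for the noise exponent `r` and the Łojasiewicz exponent `μ = μ_θ`. -/
noncomputable def rateExponent (r μ : ℝ) : ℝ :=
  if μ < 2 then min r (1 / (2 - μ)) else r

lemma one_lt_rateExponent {r μ : ℝ} (hr : 1 < r) (hμ : 1 < μ) : 1 < rateExponent r μ := by
  unfold rateExponent
  split_ifs with hμ2
  · exact lt_min hr (by rw [lt_div_iff₀] <;> linarith)
  · exact hr

lemma rateExponent_le (r μ : ℝ) : rateExponent r μ ≤ r := by
  unfold rateExponent
  split_ifs
  exacts [min_le_left _ _, le_rfl]

lemma two_sub_mul_rateExponent_le {r μ : ℝ} (hr : 0 ≤ r) : (2 - μ) * rateExponent r μ ≤ 1 := by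
  unfold rateExponent
  split_ifs with hμ2
  · rw [← le_div_iff₀' (sub_pos.2 hμ2)]
    exact min_le_right _ _
  · nlinarith

variable {E : Type*} [NormedAddCommGroup E] [InnerProductSpace ℝ E] [ProperSpace E]

theorem exists_tendsto_and_isBigO_of_hasLojasiewiczExponent {f : E → ℝ} {θ ξ : ℕ → E}
    {γ : ℕ → ℝ} {C r : ℝ} (hf : Differentiable ℝ f) (hlip : LocallyLipschitz (∇ f))
    (hγ : Monotone γ) (hγ_top : Tendsto γ atTop atTop)
    (hstep : Tendsto (fun n => γ (n + 1) - γ n) atTop (𝓝 0))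
    (hrec : ∀ n, θ (n + 1) = θ n - (γ (n + 1) - γ n) • (∇ f (θ n) + ξ n))
    (hθ : Bornology.IsBounded (Set.range θ)) (hr : 1 < r)
    (hnoise : ∀ᶠ n in atTop, ∀ k ≥ n, γ k - γ n ≤ 1 →
      ‖∑ i ∈ Finset.Ico n k, (γ (i + 1) - γ i) • ξ i‖ ≤ C * γ n ^ (-r))
    (hloj : ∀ Q, IsCompact Q → ∀ b ∈ f '' Q,
      ∃ μ, HasLojasiewiczExponent f b (𝓟 Q ⊓ comap f (𝓝 b)) μ) :
    ∃ l, Tendsto θ atTop (𝓝 l) ∧ ∀ μ, HasLojasiewiczExponent f (f l) (𝓝 l) μ →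
      ((fun n => ‖∇ f (θ n)‖ ^ 2) =O[atTop] fun n => γ n ^ (-(μ * rateExponent r μ))) ∧
      ((fun n => |f (θ n) - f l|) =O[atTop] fun n => γ n ^ (-(μ * rateExponent r μ))) ∧
      (fun n => ‖θ n - l‖) =O[atTop] fun n => γ n ^ (-(rateExponent r μ - 1)) := by
  obtain ⟨R, hR⟩ := hθ.subset_closedBall 0
  set Q := Metric.closedBall (0 : E) R
  have hQ : IsCompact Q := isCompact_closedBall 0 R
  have hθQ (n : ℕ) : θ n ∈ Q := hR (Set.mem_range_self n)
  obtain ⟨L, hL⟩ := hlip.locallyLipschitzOn.exists_lipschitzOnWith_of_compact hQ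
  obtain ⟨N, h, c, K, hb⟩ := exists_isBlockDescent hf (convex_closedBall 0 R) hL hθQ hγ hγ_top hstep
    hrec hr hnoise
  obtain ⟨u, hu⟩ := hb.exists_tendsto ((hQ.image hf.continuous).bddBelow.mono
    (Set.range_subset_iff.2 fun n => Set.mem_image_of_mem f (hθQ n)))
  have rates {μ : ℝ} {F : Filter E} (hμ : HasLojasiewiczExponent f u F μ)
      (hF : Tendsto (fun j => θ (N j)) atTop F) :=
    (hb.of_le (one_lt_rateExponent hr hμ.1.1) (rateExponent_le r μ)).rates hf
      (convex_closedBall 0 R) hL hθQ (two_sub_mul_rateExponent_le (by linarith)) hu hμ hF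
  have tendsto_of_isBigO {μ : ℝ} {l : E} (hμ : μ ∈ Set.Ioc 1 2)
      (hl : (fun n => θ n - l) =O[atTop] fun n => γ n ^ (-(rateExponent r μ - 1))) :
      Tendsto θ atTop (𝓝 l) :=
    tendsto_sub_nhds_zero_iff.1 <| hl.trans_tendsto <|
      (tendsto_rpow_neg_atTop (sub_pos.2 (one_lt_rateExponent hr hμ.1))).comp hγ_top
  have hub : u ∈ f '' Q := (hQ.image hf.continuous).isClosed.mem_of_tendsto hu
    (.of_forall fun j => Set.mem_image_of_mem f (hθQ _))
  obtain ⟨μ₀, hμ₀⟩ := hloj Q hQ u hub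
  obtain ⟨-, -, l, hl⟩ := rates hμ₀ (tendsto_inf.2
    ⟨tendsto_principal.2 (.of_forall fun j => hθQ _), tendsto_comap_iff.2 hu⟩)
  have hθl := tendsto_of_isBigO hμ₀.1 hl
  have hNl : Tendsto (fun j => θ (N j)) atTop (𝓝 l) := hθl.comp hb.strictMono.tendsto_atTop
  obtain rfl : u = f l := tendsto_nhds_unique hu ((hf.continuous.tendsto l).comp hNl)
  refine ⟨l, hθl, fun μ hμ => ?_⟩
  obtain ⟨hgrad, hval, l', hl'⟩ := rates hμ hNl
  obtain rfl : l' = l := tendsto_nhds_unique (tendsto_of_isBigO hμ.1 hl') hθl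
  exact ⟨hgrad, hval.abs_left, hl'.norm_left⟩

theorem stochastic_gradient_big_O_rates_general
    {Ω : Type*} [MeasurableSpace Ω] (P : Measure Ω)
    (f : E → ℝ) (hfd : Differentiable ℝ f) (hlip : LocallyLipschitz (∇ f))
    (α : ℕ → ℝ) (hα : ∀ n, 0 ≤ α n) (θ ξ : ℕ → Ω → E)
    (hrec : ∀ n ω, θ (n + 1) ω = θ n ω - α n • (∇ f (θ n ω) + ξ n ω))
    (hα0 : Tendsto α atTop (𝓝 0))
    (γ : ℕ → ℝ) (hγ : ∀ n, γ n = ∑ i ∈ Finset.range n, α i) (hγ_top : Tendsto γ atTop atTop)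
    (a : ℕ → ℝ → ℕ) (ha : ∀ n t, 0 < t → a n t = sSup {k | n ≤ k ∧ γ k - γ n ≤ t})
    (Λ : Set Ω) (hΛ : Λ = {ω | ∃ C, ∀ n, ‖θ n ω‖ ≤ C})
    (r : ℝ) (hr : 1 < r) (noise : ℕ → Ω → ℝ)
    (hnoise : ∀ n ω, noise n ω =
      ⨆ k ∈ Set.Ico n (a n 1), ‖∑ i ∈ Finset.Icc n k, (α i * γ i ^ r) • ξ i ω‖)
    (hbdd : ∀ᵐ ω ∂P, ω ∈ Λ → IsBoundedUnder (· ≤ ·) atTop (fun n => noise n ω))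
    (hLoj : ∀ Q : Set E, IsCompact Q → ∀ b ∈ f '' Q,
      ∃ δ μ M : ℝ, 0 < δ ∧ μ ∈ Set.Ioc (1 : ℝ) 2 ∧
        ∀ x ∈ Q, |f x - b| ≤ δ → |f x - b| ≤ M * ‖∇ f x‖ ^ μ)
    (δl μl Ml : E → ℝ) (hδl : ∀ x, 0 < δl x) (hμl : ∀ x, μl x ∈ Set.Ioc (1 : ℝ) 2)
    (hLocal : ∀ x y, ‖y - x‖ ≤ δl x → |f y - f x| ≤ Ml x * ‖∇ f y‖ ^ μl x)
    (rmin p q : E → ℝ) (hrmin : ∀ x, rmin x = if μl x < 2 then min r (1 / (2 - μl x)) else r)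
    (hp : ∀ x, p x = μl x * rmin x) (hq : ∀ x, q x = rmin x - 1) :
    ∀ᵐ ω ∂P, ω ∈ Λ → ∃ θhat, Tendsto (fun n => θ n ω) atTop (𝓝 θhat) ∧
      ((fun n => ‖∇ f (θ n ω)‖ ^ 2) =O[atTop] fun n => γ n ^ (-(p θhat))) ∧
      ((fun n => |f (θ n ω) - f θhat|) =O[atTop] fun n => γ n ^ (-(p θhat))) ∧
      ((fun n => ‖θ n ω - θhat‖) =O[atTop] fun n => γ n ^ (-(q θhat))) := by
  have hstep (n : ℕ) : γ (n + 1) - γ n = α n := by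
    rw [hγ, hγ, Finset.sum_range_succ, add_sub_cancel_left]
  have hmono : Monotone γ :=
    monotone_nat_of_le_succ fun n => sub_nonneg.1 ((hα n).trans_eq (hstep n).symm)
  obtain rfl : α = fun n => γ (n + 1) - γ n := funext fun n => (hstep n).symm
  filter_upwards [hbdd] with ω hω hmem
  obtain ⟨C, hC⟩ := hω hmem
  obtain ⟨R, hR⟩ := hΛ ▸ hmem
  have hnoise_le := eventually_norm_sum_Ico_smul_le hmono hγ_top (by linarith : 0 ≤ r)
    ((eventually_map.1 hC).mono fun n hn k hk hγk =>
      (norm_sum_Ico_le_biSup hmono hγ_top _ hk hγk).trans (by rwa [hnoise, ha n 1 one_pos] at hn))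
  obtain ⟨θhat, hθhat, hrates⟩ := exists_tendsto_and_isBigO_of_hasLojasiewiczExponent hfd hlip hmono
    hγ_top hα0 (fun n => hrec n ω)
    (isBounded_iff_forall_norm_le.2 ⟨R, Set.forall_mem_range.2 hR⟩) hr hnoise_le
    fun Q hQ b hb => by
      obtain ⟨δ, μ, M, hδ, hμ, hM⟩ := hLoj Q hQ b hb
      exact ⟨μ, hasLojasiewiczExponent_inf_comap hδ hμ hM⟩
  refine ⟨θhat, hθhat, ?_⟩
  rw [hp, hq, hrmin]
  exact hrates _ (hasLojasiewiczExponent_nhds (hδl _) (hμl _) (hLocal _))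

end Trajectory

/-- Corollary 1.1 (ii) of the paper: under Assumptions 1.1,
1.2, 1.3, almost surely on `Λ` minus `{ξ = 0, r̂ > r}` (with `θ̂ = lim θ_n`):
`‖∇f(θ_n)‖² = O(γ_n^{−p̂})`, `|f(θ_n) − f(θ̂)| = O(γ_n^{−p̂})` and
`‖θ_n − θ̂‖ = O(γ_n^{−q̂})`.  (`r̂ > r` is the condition
`μ̂ = 2 ∨ r < 1/(2 − μ̂)`.) -/
theorem stochastic_gradient_big_O_rates
    {d : ℕ} (hd : 1 ≤ d)
    {Ω : Type} [MeasurableSpace Ω] (P : Measure Ω) [IsProbabilityMeasure P]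
    (f : EuclideanSpace ℝ (Fin d) → ℝ)
    (hfd : Differentiable ℝ f)
    (hlip : LocallyLipschitz (fun x => gradient f x))
    (α : ℕ → ℝ) (hαpos : ∀ n, 0 < α n)
    (θ ξ : ℕ → Ω → EuclideanSpace ℝ (Fin d))
    (hrec : ∀ n ω, θ (n + 1) ω = θ n ω - α n • (gradient f (θ n ω) + ξ n ω))
    -- Assumption 1.1
    (hα0 : Tendsto α atTop (nhds 0))
    (γ : ℕ → ℝ) (hγ : ∀ n, γ n = ∑ i ∈ Finset.range n, α i)
    (hαdiv : Tendsto γ atTop atTop)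
    -- the interpolation index `a(n,t)`
    (a : ℕ → ℝ → ℕ)
    (ha : ∀ n t, 0 < t → a n t = sSup {k | n ≤ k ∧ γ k - γ n ≤ t})
    -- the event Λ
    (Λ : Set Ω) (hΛ : Λ = {ω | ∃ C, ∀ n, ‖θ n ω‖ ≤ C})
    -- Assumption 1.2
    (r : ℝ) (hr : 1 < r)
    (noise : ℕ → Ω → ℝ)
    (hnoise : ∀ n ω, noise n ω =
      ⨆ k ∈ Set.Ico n (a n 1), ‖∑ i ∈ Finset.Icc n k, (α i * γ i ^ r) • ξ i ω‖)
    (hA12 : ∀ᵐ ω ∂P, ω ∈ Λ → IsBoundedUnder (· ≤ ·) atTop (fun n => noise n ω))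
    (Xi : Ω → ℝ) (hXi : ∀ ω, Xi ω = Filter.limsup (fun n => noise n ω) atTop)
    -- Assumption 1.3 (Łojasiewicz-type gradient inequality)
    (hLoj : ∀ Q : Set (EuclideanSpace ℝ (Fin d)), IsCompact Q → ∀ b ∈ f '' Q,
      ∃ δ μ M : ℝ, δ ∈ Set.Ioc (0 : ℝ) 1 ∧ μ ∈ Set.Ioc (1 : ℝ) 2 ∧ 1 ≤ M ∧
        ∀ x ∈ Q, |f x - b| ≤ δ → |f x - b| ≤ M * ‖gradient f x‖ ^ μ)
    -- the local Łojasiewicz data `δ_θ, μ_θ, M_θ` provided by Assumption 1.3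
    (δl μl Ml : EuclideanSpace ℝ (Fin d) → ℝ)
    (hδl : ∀ x, δl x ∈ Set.Ioc (0 : ℝ) 1)
    (hμl : ∀ x, μl x ∈ Set.Ioc (1 : ℝ) 2)
    (hMl : ∀ x, 1 ≤ Ml x)
    (hLocal : ∀ x y, ‖y - x‖ ≤ δl x → |f y - f x| ≤ Ml x * ‖gradient f y‖ ^ μl x)
    -- `min{r, r_θ}`, `p_θ = μ_θ min{r, r_θ}` and `q_θ = min{r, r_θ} − 1`
    (rmin p q : EuclideanSpace ℝ (Fin d) → ℝ)
    (hrmin : ∀ x, rmin x = if μl x < 2 then min r (1 / (2 - μl x)) else r)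
    (hp : ∀ x, p x = μl x * rmin x)
    (hq : ∀ x, q x = rmin x - 1) :
    ∀ᵐ ω ∂P, ω ∈ Λ →
      ∃ θhat, Tendsto (fun n => θ n ω) atTop (nhds θhat) ∧
        (¬ (Xi ω = 0 ∧ (μl θhat = 2 ∨ r < 1 / (2 - μl θhat))) →
          ((fun n => ‖gradient f (θ n ω)‖ ^ 2) =O[atTop] fun n => γ n ^ (-(p θhat))) ∧
          ((fun n => |f (θ n ω) - f θhat|) =O[atTop] fun n => γ n ^ (-(p θhat))) ∧
          ((fun n => ‖θ n ω - θhat‖) =O[atTop] fun n => γ n ^ (-(q θhat)))) :=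
  (stochastic_gradient_big_O_rates_general P f hfd hlip α (fun n => (hαpos n).le) θ ξ hrec hα0 γ hγ
    hαdiv a ha Λ hΛ r hr noise hnoise hA12
    (fun Q hQ b hb =>
      let ⟨δ, μ, M, hδ, hμ, _, hM⟩ := hLoj Q hQ b hb
      ⟨δ, μ, M, hδ.1, hμ, hM⟩)
    δl μl Ml (fun x => (hδl x).1) hμl hLocal rmin p q hrmin hp hq).mono
    fun _ h hω => (h hω).imp fun _ h => ⟨h.1, fun _ => h.2⟩
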